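/- arXiv:2212.01919 — 2 statements merged into one kernel-verified Lean document; each statement's English description precedes it below -/
import Mathlib

section
/- Let X ⊆ (ℂ^n,0) be a germ of an analytic variety and f ∈ O_n with μ_X(f) < ∞, and set Y = f^{-1}(0). Then μ_X(f) = μ(f) + dim_ℂ Θ/(Θ_X + H_Y). -/
open Filter Topology Polynomial

set_option maxHeartbeats 1000000
set_option synthInstance.maxHeartbeats 1000000

noncomputable section

/-- The algebra structure on germs of complex valued functions. -/
instance Filter.Germ.instAlgebraComplex {α : Type*} (l : Filter α) :
    Algebra ℂ (Filter.Germ l ℂ) where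
  algebraMap := (Filter.Germ.coeRingHom l).comp (algebraMap ℂ (α → ℂ))
  commutes' := fun c g => mul_comm _ _
  smul_def' := fun c g => Filter.Germ.inductionOn g fun f => rfl

/-- The local algebra `𝒪ₙ` of germs at `0 ∈ ℂⁿ` of holomorphic functions,
realized as the subalgebra of germs at `0` admitting an analytic representative. -/
def On (n : ℕ) : Subalgebra ℂ (Filter.Germ (𝓝 (0 : Fin n → ℂ)) ℂ) where
  carrier := {g | ∃ f : (Fin n → ℂ) → ℂ,
    AnalyticAt ℂ f 0 ∧ (f : Filter.Germ (𝓝 (0 : Fin n → ℂ)) ℂ) = g}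
  mul_mem' := by
    rintro a b ⟨f, hf, rfl⟩ ⟨g, hg, rfl⟩
    exact ⟨f * g, hf.mul hg, rfl⟩
  add_mem' := by
    rintro a b ⟨f, hf, rfl⟩ ⟨g, hg, rfl⟩
    exact ⟨f + g, hf.add hg, rfl⟩
  algebraMap_mem' := fun c => ⟨fun _ => c, analyticAt_const, rfl⟩

variable {n : ℕ}

/-- Existence of an analytic representative for an element of `𝒪ₙ`. -/
lemma On.exists_rep (g : On n) : ∃ f : (Fin n → ℂ) → ℂ,
    AnalyticAt ℂ f 0 ∧ (f : Filter.Germ (𝓝 (0 : Fin n → ℂ)) ℂ) = (g : Filter.Germ _ ℂ) :=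
  g.2

/-- A chosen analytic representative of a germ in `𝒪ₙ`. -/
def On.rep (g : On n) : (Fin n → ℂ) → ℂ := (On.exists_rep g).choose

lemma On.rep_analyticAt (g : On n) : AnalyticAt ℂ (On.rep g) 0 :=
  (On.exists_rep g).choose_spec.1

lemma On.rep_spec (g : On n) :
    (On.rep g : Filter.Germ (𝓝 (0 : Fin n → ℂ)) ℂ) = (g : Filter.Germ _ ℂ) :=
  (On.exists_rep g).choose_spec.2

/-- Build an element of `𝒪ₙ` from an analytic function. -/
def mkOn {n : ℕ} (f : (Fin n → ℂ) → ℂ) (hf : AnalyticAt ℂ f 0) : On n :=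
  ⟨(f : Filter.Germ (𝓝 (0 : Fin n → ℂ)) ℂ), ⟨f, hf, rfl⟩⟩

/-- The `i`-th partial derivative, as an operation on `𝒪ₙ`. -/
def pd (i : Fin n) (g : On n) : On n :=
  mkOn (fun x => fderiv ℂ (On.rep g) x (Pi.single i 1)) (by
    have h := ((ContinuousLinearMap.apply ℂ ℂ (Pi.single i 1)).analyticAt
      (fderiv ℂ (On.rep g) 0)).comp (On.rep_analyticAt g).fderiv
    exact h)

/-- Restriction of germs at `0` to germs along a finer filter. -/
def restrictGerm {l : Filter (Fin n → ℂ)} (hl : l ≤ 𝓝 (0 : Fin n → ℂ)) :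
    Filter.Germ (𝓝 (0 : Fin n → ℂ)) ℂ →+* Filter.Germ l ℂ where
  toFun g := g.compTendsto id (Filter.tendsto_id'.2 hl)
  map_one' := rfl
  map_mul' a b := Filter.Germ.inductionOn₂ a b fun f g => rfl
  map_zero' := rfl
  map_add' a b := Filter.Germ.inductionOn₂ a b fun f g => rfl

/-- Evaluation of germs restricted along `l ≤ 𝓝 0`, as a ring homomorphism on `𝒪ₙ`. -/
def restrictOn (n : ℕ) {l : Filter (Fin n → ℂ)} (hl : l ≤ 𝓝 (0 : Fin n → ℂ)) :
    On n →+* Filter.Germ l ℂ :=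
  (restrictGerm hl).comp (On n).val.toRingHom

/-- The ideal `I_X ⊆ 𝒪ₙ` of germs vanishing on a set `X` near `0`. -/
def IX (n : ℕ) (X : Set (Fin n → ℂ)) : Ideal (On n) :=
  RingHom.ker (restrictOn n (nhdsWithin_le_nhds (s := X)))

/-- The maximal ideal `𝔪 ⊂ 𝒪ₙ` of germs vanishing at the origin. -/
def mId (n : ℕ) : Ideal (On n) :=
  RingHom.ker (restrictOn n (pure_le_nhds (0 : Fin n → ℂ)))

/-- `X` is the germ at `0` of an analytic variety: `0 ∈ X` and, near `0`, `X` coincides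
with the common zero locus of finitely many holomorphic functions. -/
def IsAnalyticGermAt0 (n : ℕ) (X : Set (Fin n → ℂ)) : Prop :=
  (0 : Fin n → ℂ) ∈ X ∧
    ∃ (m : ℕ) (g : Fin m → (Fin n → ℂ) → ℂ),
      (∀ j, AnalyticAt ℂ (g j) 0) ∧
      ∀ᶠ x in 𝓝 (0 : Fin n → ℂ), (x ∈ X ↔ ∀ j, g j x = 0)

/-- The action `δ(g) = Σ δᵢ ∂g/∂xᵢ` of a vector field `δ ∈ Θ ≅ 𝒪ₙⁿ` on `g ∈ 𝒪ₙ`. -/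
def applyVF (δ : Fin n → On n) (g : On n) : On n := ∑ i, δ i * pd i g

lemma applyVF_add (a b : Fin n → On n) (g : On n) :
    applyVF (a + b) g = applyVF a g + applyVF b g := by
  simp [applyVF, add_mul, Finset.sum_add_distrib]

lemma applyVF_smul (c : On n) (a : Fin n → On n) (g : On n) :
    applyVF (c • a) g = c * applyVF a g := by
  simp [applyVF, Finset.mul_sum, smul_eq_mul, mul_assoc]

/-- For fixed `f`, the map `δ ↦ δ(f)` as an `𝒪ₙ`-linear map `Θ → 𝒪ₙ`. -/
def gradMap (n : ℕ) (f : On n) : (Fin n → On n) →ₗ[On n] On n where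
  toFun δ := applyVF δ f
  map_add' a b := applyVF_add a b f
  map_smul' c a := applyVF_smul c a f

/-- The module `Θ_X` of logarithmic vector fields of `X`, i.e. vector fields
preserving the ideal `I_X`. -/
def ThetaX (n : ℕ) (X : Set (Fin n → ℂ)) : Submodule (On n) (Fin n → On n) where
  carrier := {δ | ∀ g ∈ IX n X, applyVF δ g ∈ IX n X}
  add_mem' := by
    intro a b ha hb g hg
    rw [applyVF_add]
    exact Ideal.add_mem _ (ha g hg) (hb g hg)
  zero_mem' := by
    intro g hg
    have h0 : applyVF (0 : Fin n → On n) g = 0 := by simp [applyVF]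
    rw [h0]; exact Ideal.zero_mem _
  smul_mem' := by
    intro c a ha g hg
    rw [applyVF_smul]
    exact Ideal.mul_mem_left _ _ (ha g hg)

/-- The module `Θ_Y` of vector fields tangent to the hypersurface `Y = f⁻¹(0)`,
i.e. `δ(f) ∈ ⟨f⟩`. -/
def ThetaF (n : ℕ) (f : On n) : Submodule (On n) (Fin n → On n) :=
  Submodule.comap (gradMap n f) (Ideal.span {f})

/-- The module `H_Y` of Hamiltonian vector fields of `f`, i.e. `δ(f) = 0`. -/
def HamF (n : ℕ) (f : On n) : Submodule (On n) (Fin n → On n) :=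
  LinearMap.ker (gradMap n f)

/-- The Bruce–Roberts ideal `df(Θ_X) ⊆ 𝒪ₙ`. -/
def BRIdeal (n : ℕ) (X : Set (Fin n → ℂ)) (f : On n) : Ideal (On n) :=
  Submodule.map (gradMap n f) (ThetaX n X)

/-- The Jacobian ideal `J(f) = ⟨∂f/∂x₁, …, ∂f/∂xₙ⟩`. -/
def Jac (n : ℕ) (f : On n) : Ideal (On n) :=
  Ideal.span (Set.range fun i => pd i f)

/-- The ideal `J(f,h)` generated by the `2×2` minors of the Jacobian matrix of `(f,h)`. -/
def Jmin (n : ℕ) (f h : On n) : Ideal (On n) :=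
  Ideal.span (Set.range fun p : Fin n × Fin n => pd p.1 f * pd p.2 h - pd p.2 f * pd p.1 h)

/-- The Milnor number `μ(f)`. -/
def mu (n : ℕ) (f : On n) : ℕ := Module.finrank ℂ (On n ⧸ Jac n f)

/-- The Tjurina number `τ(f)`. -/
def tau (n : ℕ) (f : On n) : ℕ :=
  Module.finrank ℂ (On n ⧸ (Jac n f + Ideal.span {f}))

/-- The Bruce–Roberts Milnor number `μ_X(f)`. -/
def muX (n : ℕ) (X : Set (Fin n → ℂ)) (f : On n) : ℕ :=
  Module.finrank ℂ (On n ⧸ BRIdeal n X f)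

/-- The Bruce–Roberts Tjurina number `τ_X(f)`. -/
def tauX (n : ℕ) (X : Set (Fin n → ℂ)) (f : On n) : ℕ :=
  Module.finrank ℂ (On n ⧸ (BRIdeal n X f + Ideal.span {f}))

/-- The value at the origin of a germ in `𝒪ₙ`. -/
def ev0 (g : On n) : ℂ := On.rep g 0

/-- The linear part `j¹δ` of a vector field `δ`, as the matrix `(∂δⱼ/∂xᵢ)(0)`. -/
def linPart (δ : Fin n → On n) : Matrix (Fin n) (Fin n) ℂ :=
  Matrix.of fun i j => ev0 (pd i (δ j))

/-- The eigenvalues (with multiplicities) of the linear part of `δ` are given by `w`. -/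
def EigsEq (δ : Fin n → On n) (w : Fin n → ℚ) : Prop :=
  (linPart δ).charpoly = ∏ i, (Polynomial.X - Polynomial.C ((w i : ℂ)))

/-- The germ at `0` of the coordinate function `xᵢ`. -/
def coordG (i : Fin n) : On n :=
  mkOn (fun x : Fin n → ℂ => x i)
    ((ContinuousLinearMap.proj (R := ℂ) (φ := fun _ : Fin n => ℂ) i).analyticAt _)

/-- `g` is quasihomogeneous of degree `d` with respect to the weights `w` (in the given
coordinates): the Euler identity `Σ wᵢ xᵢ ∂g/∂xᵢ = d g` holds. -/
def IsQH (n : ℕ) (w : Fin n → ℚ) (d : ℚ) (g : On n) : Prop :=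
  ∑ i, (w i : ℂ) • (coordG i * pd i g) = (d : ℂ) • g

/-- A germ of a biholomorphic change of coordinates at `0 ∈ ℂⁿ`. -/
structure CoordChange (n : ℕ) where
  toFun : (Fin n → ℂ) → (Fin n → ℂ)
  invFun : (Fin n → ℂ) → (Fin n → ℂ)
  analyticAt : AnalyticAt ℂ toFun 0
  inv_analyticAt : AnalyticAt ℂ invFun 0
  map_zero : toFun 0 = 0
  inv_map_zero : invFun 0 = 0
  left_inv : ∀ᶠ x in 𝓝 (0 : Fin n → ℂ), invFun (toFun x) = x
  right_inv : ∀ᶠ x in 𝓝 (0 : Fin n → ℂ), toFun (invFun x) = x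

lemma CoordChange.tendsto (φ : CoordChange n) :
    Filter.Tendsto φ.toFun (𝓝 (0 : Fin n → ℂ)) (𝓝 (0 : Fin n → ℂ)) := by
  have h := φ.analyticAt.continuousAt
  rwa [ContinuousAt, φ.map_zero] at h

/-- The pullback (composition) of a germ `g ∈ 𝒪ₙ` under a change of coordinates. -/
def pullback (φ : CoordChange n) (g : On n) : On n :=
  ⟨(g : Filter.Germ (𝓝 (0 : Fin n → ℂ)) ℂ).compTendsto φ.toFun φ.tendsto, by
    refine ⟨On.rep g ∘ φ.toFun, ?_, ?_⟩
    · have h := On.rep_analyticAt g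
      rw [← φ.map_zero] at h
      exact h.comp φ.analyticAt
    · rw [← On.rep_spec g]
      exact (Filter.Germ.coe_compTendsto _ φ.tendsto).symm⟩

/-- Definition 1.1: the pair `(f, X)` is relatively quasihomogeneous with respect to the
weights `w`: in suitable coordinates, `f` is quasihomogeneous of degree `1` and `I_X` admits
a system of quasihomogeneous generators of positive degrees, all with respect to `w`. -/
def RelQH (n : ℕ) (X : Set (Fin n → ℂ)) (f : On n) (w : Fin n → ℚ) : Prop :=
  ∃ φ : CoordChange n,
    IsQH n w 1 (pullback φ f) ∧
    ∃ (m : ℕ) (h : Fin m → On n) (d : Fin m → ℚ),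
      Ideal.span (Set.range h) = IX n X ∧ (∀ j, 0 < d j) ∧
      ∀ j, IsQH n w (d j) (pullback φ (h j))

/-- The variety `X` is quasihomogeneous with respect to the weights `w`: in suitable
coordinates, `I_X` admits a system of quasihomogeneous generators of positive degrees. -/
def VarQH (n : ℕ) (X : Set (Fin n → ℂ)) (w : Fin n → ℚ) : Prop :=
  ∃ φ : CoordChange n,
    ∃ (m : ℕ) (h : Fin m → On n) (d : Fin m → ℚ),
      Ideal.span (Set.range h) = IX n X ∧ (∀ j, 0 < d j) ∧
      ∀ j, IsQH n w (d j) (pullback φ (h j))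

instance (f : On n) : HasQuotient (↥(ThetaF n f)) (Submodule ↥(On n) ↥(ThetaF n f)) :=
  Submodule.hasQuotient (R := ↥(On n)) (M := ↥(ThetaF n f))


/-- Exactness of `0 → M/(N + ker φ) → R/φ(N) → R/φ(M) → 0` on the level of dimensions. -/
lemma finrank_quot_map_aux {A M : Type*} [CommRing A] [Algebra ℂ A] [AddCommGroup M] [Module A M]
    [Module ℂ M] [IsScalarTower ℂ A M] (φ : M →ₗ[A] A) (N : Submodule A M)
    (hfin : FiniteDimensional ℂ (A ⧸ (Submodule.map φ N : Submodule A A))) :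
    Module.finrank ℂ (A ⧸ (Submodule.map φ N : Submodule A A)) =
      Module.finrank ℂ (A ⧸ (LinearMap.range φ : Submodule A A)) +
      Module.finrank ℂ (M ⧸ (N ⊔ LinearMap.ker φ)) := by
  have hc : N ⊔ LinearMap.ker φ = (Submodule.map φ N).comap φ :=
    (Submodule.comap_map_eq φ N).symm
  have hle : Submodule.map φ N ≤ LinearMap.range φ := LinearMap.map_le_range
  let ψ : (M ⧸ (N ⊔ LinearMap.ker φ)) →ₗ[A] (A ⧸ (Submodule.map φ N : Submodule A A)) :=
    Submodule.mapQ _ _ φ hc.le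
  let π : (A ⧸ (Submodule.map φ N : Submodule A A)) →ₗ[A]
      (A ⧸ (LinearMap.range φ : Submodule A A)) := Submodule.factor hle
  have hψ : Function.Injective ψ := by
    rw [← LinearMap.ker_eq_bot]
    exact Submodule.ker_liftQ_eq_bot _ _ _ (by rw [LinearMap.ker_comp, Submodule.ker_mkQ, hc])
  have hπ : Function.Surjective π := Submodule.factor_surjective hle
  have hex : LinearMap.ker π = LinearMap.range ψ := by
    ext x
    obtain ⟨a, rfl⟩ := Submodule.mkQ_surjective _ x
    constructor
    · intro hx
      have hx' : (Submodule.Quotient.mk a : A ⧸ (LinearMap.range φ : Submodule A A)) = 0 := hx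
      rw [Submodule.Quotient.mk_eq_zero] at hx'
      obtain ⟨m, rfl⟩ := hx'
      exact ⟨Submodule.Quotient.mk m, rfl⟩
    · rintro ⟨y, hy⟩
      obtain ⟨m, rfl⟩ := Submodule.mkQ_surjective _ y
      rw [← hy]
      change (Submodule.Quotient.mk (φ m) : A ⧸ (LinearMap.range φ : Submodule A A)) = 0
      rw [Submodule.Quotient.mk_eq_zero]
      exact ⟨m, rfl⟩
  have key := LinearMap.finrank_range_add_finrank_ker (π.restrictScalars ℂ)
  have h1 : Module.finrank ℂ (LinearMap.range (π.restrictScalars ℂ)) =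
      Module.finrank ℂ (A ⧸ (LinearMap.range φ : Submodule A A)) := by
    rw [LinearMap.range_eq_top.2 (show Function.Surjective (π.restrictScalars ℂ) from hπ)]
    exact finrank_top ℂ _
  have h2 : LinearMap.ker (π.restrictScalars ℂ) = LinearMap.range (ψ.restrictScalars ℂ) := by
    ext x
    exact SetLike.ext_iff.1 hex x
  have h3 : Module.finrank ℂ (LinearMap.range (ψ.restrictScalars ℂ)) =
      Module.finrank ℂ (M ⧸ (N ⊔ LinearMap.ker φ)) :=
    LinearMap.finrank_range_of_inj (f := ψ.restrictScalars ℂ) hψ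
  rw [h1, h2, h3] at key
  exact key.symm

lemma Jac_eq_range_aux (n : ℕ) (f : On n) : Jac n f = LinearMap.range (gradMap n f) := by
  apply le_antisymm
  · refine Ideal.span_le.2 ?_
    rintro _ ⟨i, rfl⟩
    refine ⟨Pi.single i 1, ?_⟩
    change ∑ j, (Pi.single i 1 : Fin n → On n) j * pd j f = pd i f
    rw [Finset.sum_eq_single i]
    · simp
    · intro j _ hj
      simp [Pi.single_eq_of_ne hj]
    · simp
  · rintro _ ⟨δ, rfl⟩
    change ∑ j, δ j * pd j f ∈ Jac n f
    refine Ideal.sum_mem _ fun i _ => Ideal.mul_mem_left _ _ ?_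
    exact Ideal.subset_span (Set.mem_range_self i)

/-- Formula (2) of Proposition 2.1: `μ_X(f) = μ(f) + dim_ℂ Θ/(Θ_X + H_Y)`. -/
theorem muX_decomposition (n : ℕ) (X : Set (Fin n → ℂ)) (hX : IsAnalyticGermAt0 n X)
    (f : On n) (hfin : FiniteDimensional ℂ (On n ⧸ BRIdeal n X f)) :
    muX n X f = mu n f +
      Module.finrank ℂ ((Fin n → On n) ⧸ (ThetaX n X ⊔ HamF n f)) := by
  unfold muX mu
  rw [Jac_eq_range_aux]
  exact finrank_quot_map_aux (gradMap n f) (ThetaX n X) hfin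

end
end

section
/- Let X ⊆ (ℂ^n,0) be a germ of an analytic variety and f ∈ O_n with μ_X(f) < ∞, and set Y = f^{-1}(0). Then μ_X(f) − τ_X(f) = μ(f) − τ(f) + dim_ℂ Θ_Y/(H_Y + (Θ_X ∩ Θ_Y)). -/
open Filter Topology Polynomial

set_option maxHeartbeats 1000000
set_option synthInstance.maxHeartbeats 1000000

noncomputable section

variable {n : ℕ}

instance (f : On n) (N : Submodule ↥(On n) ↥(ThetaF n f)) : AddCommGroup (↥(ThetaF n f) ⧸ N) :=
  Submodule.Quotient.addCommGroup (R := ↥(On n)) (M := ↥(ThetaF n f)) N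

instance (f : On n) (N : Submodule ↥(On n) ↥(ThetaF n f)) : Module ℂ (↥(ThetaF n f) ⧸ N) :=
  Submodule.Quotient.module' (R := ↥(On n)) (M := ↥(ThetaF n f)) (S := ℂ) N


lemma finrank_quot_add_map {A : Type*} [CommRing A] [Algebra ℂ A] (B J : Ideal A) (h : B ≤ J)
    [FiniteDimensional ℂ (A ⧸ B)] :
    Module.finrank ℂ (A ⧸ J) +
      Module.finrank ℂ ((Submodule.map B.mkQ J).restrictScalars ℂ) =
      Module.finrank ℂ (A ⧸ B) := by
  have e1 : ((Submodule.map B.mkQ J).restrictScalars ℂ) =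
      LinearMap.ker ((Submodule.factor h).restrictScalars ℂ) := by
    ext x
    obtain ⟨a, rfl⟩ := B.mkQ_surjective x
    simp only [Submodule.restrictScalars_mem, Submodule.mem_map, LinearMap.mem_ker,
      LinearMap.coe_restrictScalars]
    constructor
    · rintro ⟨y, hy, hxy⟩
      rw [← hxy]
      exact (Submodule.Quotient.mk_eq_zero J).2 hy
    · intro hx
      refine ⟨a, ?_, rfl⟩
      exact (Submodule.Quotient.mk_eq_zero J).1 hx
  have e2 : LinearMap.range ((Submodule.factor h).restrictScalars ℂ) = ⊤ :=
    LinearMap.range_eq_top.2 (Submodule.factor_surjective h)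
  have := LinearMap.finrank_range_add_finrank_ker ((Submodule.factor h).restrictScalars ℂ)
  rw [e2, finrank_top] at this
  rw [e1]
  exact this

lemma abstract_decomp {A M : Type*} [CommRing A] [Algebra ℂ A] [AddCommGroup M] [Module A M]
    [Module ℂ M] [IsScalarTower ℂ A M] (g : M →ₗ[A] A) (T : Submodule A M) (f : A)
    (hfin : FiniteDimensional ℂ (A ⧸ (Submodule.map g T : Ideal A))) :
    (Module.finrank ℂ (A ⧸ (Submodule.map g T : Ideal A)) : ℤ) -
        Module.finrank ℂ (A ⧸ ((Submodule.map g T : Ideal A) + Ideal.span {f})) =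
      (Module.finrank ℂ (A ⧸ (LinearMap.range g : Ideal A)) : ℤ) -
        Module.finrank ℂ (A ⧸ ((LinearMap.range g : Ideal A) + Ideal.span {f})) +
      Module.finrank ℂ ((Submodule.comap g (Ideal.span {f})) ⧸
        Submodule.comap (Submodule.comap g (Ideal.span {f})).subtype
          (LinearMap.ker g ⊔ (T ⊓ Submodule.comap g (Ideal.span {f})))) := by
  set B : Ideal A := Submodule.map g T with hB
  set J : Ideal A := LinearMap.range g with hJ
  set F : Ideal A := Ideal.span {f} with hF
  have hBJ : B ≤ J := LinearMap.map_le_range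
  have h1 := finrank_quot_add_map B (B + F) le_sup_left
  have h2 := finrank_quot_add_map B J hBJ
  have h3 := finrank_quot_add_map B (J + F) (hBJ.trans le_sup_left)
  have hBB : Submodule.map B.mkQ B = ⊥ := by
    simp
  have m1 : Submodule.map B.mkQ (B + F) = Submodule.map B.mkQ F := by
    rw [Submodule.add_eq_sup, Submodule.map_sup, hBB, bot_sup_eq]
  have m3 : (Submodule.map B.mkQ (J + F)).restrictScalars ℂ =
      (Submodule.map B.mkQ J).restrictScalars ℂ ⊔ (Submodule.map B.mkQ F).restrictScalars ℂ := by
    rw [Submodule.add_eq_sup, Submodule.map_sup, Submodule.restrictScalars_sup]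
  rw [m1] at h1
  rw [m3] at h3
  have h4 := Submodule.finrank_sup_add_finrank_inf_eq
    ((Submodule.map B.mkQ J).restrictScalars ℂ) ((Submodule.map B.mkQ F).restrictScalars ℂ)
  let φ : (Submodule.comap g F) →ₗ[A] A ⧸ B := B.mkQ ∘ₗ g ∘ₗ (Submodule.comap g F).subtype
  have hker : LinearMap.ker φ = Submodule.comap (Submodule.comap g F).subtype
          (LinearMap.ker g ⊔ (T ⊓ Submodule.comap g F)) := by
    ext ⟨δ, hδ⟩
    simp only [φ, LinearMap.mem_ker, LinearMap.comp_apply, Submodule.mkQ_apply,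
      Submodule.Quotient.mk_eq_zero, Submodule.mem_comap, Submodule.subtype_apply]
    constructor
    · rintro ⟨t, ht, htg⟩
      refine Submodule.mem_sup.2 ⟨δ - t, ?_, t, ⟨ht, ?_⟩, by simp⟩
      · simp [htg]
      · change g t ∈ F
        rw [htg]; exact hδ
    · intro h
      obtain ⟨a, ha, t, ht, rfl⟩ := Submodule.mem_sup.1 h
      rw [map_add, LinearMap.mem_ker.1 ha, zero_add]
      exact ⟨t, ht.1, rfl⟩
  have hrange : (LinearMap.range φ).restrictScalars ℂ =
      (Submodule.map B.mkQ J).restrictScalars ℂ ⊓ (Submodule.map B.mkQ F).restrictScalars ℂ := by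
    ext x
    simp only [Submodule.restrictScalars_mem, Submodule.mem_inf, LinearMap.mem_range]
    constructor
    · rintro ⟨⟨δ, hδ⟩, rfl⟩
      exact ⟨⟨g δ, ⟨δ, rfl⟩, rfl⟩, ⟨g δ, hδ, rfl⟩⟩
    · rintro ⟨⟨j, hj, rfl⟩, ⟨a, ha, hja⟩⟩
      have hd : a - j ∈ B := (Submodule.Quotient.eq B).1 hja
      have haJ : a ∈ J := by
        have := J.add_mem (hBJ hd) hj
        simpa using this
      obtain ⟨δ, hδ⟩ := haJ
      refine ⟨⟨δ, ?_⟩, ?_⟩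
      · change g δ ∈ F
        rw [hδ]; exact ha
      · change B.mkQ (g δ) = B.mkQ j
        rw [hδ, hja]
  have e := (φ.quotKerEquivRange.restrictScalars ℂ).finrank_eq
  rw [hker] at e
  have e' : Module.finrank ℂ (LinearMap.range φ) =
    Module.finrank ℂ ((LinearMap.range φ).restrictScalars ℂ) := rfl
  rw [e', hrange] at e
  rw [e]
  omega

/-- Formula (4) of Proposition 2.1 together with (1):
`μ_X(f) − τ_X(f) = μ(f) − τ(f) + dim_ℂ Θ_Y/(H_Y + (Θ_X ∩ Θ_Y))`. -/
theorem muX_sub_tauX_decomposition (n : ℕ) (X : Set (Fin n → ℂ))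
    (hX : IsAnalyticGermAt0 n X) (f : On n)
    (hfin : FiniteDimensional ℂ (On n ⧸ BRIdeal n X f)) :
    (muX n X f : ℤ) - tauX n X f = (mu n f : ℤ) - tau n f +
      Module.finrank ℂ ((ThetaF n f) ⧸
        Submodule.comap (ThetaF n f).subtype (HamF n f ⊔ (ThetaX n X ⊓ ThetaF n f))) := by
  have hJ : Jac n f = LinearMap.range (gradMap n f) := by
    apply le_antisymm
    · refine Ideal.span_le.2 ?_
      rintro _ ⟨i, rfl⟩
      refine ⟨Pi.single i 1, ?_⟩
      change ∑ j, (Pi.single i 1 : Fin n → On n) j * pd j f = pd i f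
      rw [Finset.sum_eq_single i]
      · simp
      · intro j _ hj
        simp [Pi.single_eq_of_ne hj]
      · simp
    · rintro _ ⟨δ, rfl⟩
      change ∑ j, δ j * pd j f ∈ Jac n f
      refine Ideal.sum_mem _ fun i _ => Ideal.mul_mem_left _ _ ?_
      exact Ideal.subset_span (Set.mem_range_self i)
  have h := abstract_decomp (gradMap n f) (ThetaX n X) f hfin
  rw [← hJ] at h
  exact h

end
end
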